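/- Let f and g be smooth real-valued functions on S¹ with zero mean. Then Λ(f·g) = Λ(Hf·Hg) + ∂₁(f·Hg + g·Hf) pointwise on S¹. -/

import Mathlib

open Complex Filter MeasureTheory

noncomputable section

instance : Fact (0 < 2 * Real.pi) := ⟨by positivity⟩

/-- Hilbert transform on the circle `S¹ = ℝ/2πℤ`: Fourier multiplier `-i·sgn k`. -/
def Hop (f : AddCircle (2 * Real.pi) → ℂ) : AddCircle (2 * Real.pi) → ℂ :=
  fun x => ∑' k : ℤ, (-Complex.I) * (k.sign : ℂ) * fourierCoeff f k * fourier k x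

/-- `Λⁿ`: Fourier multiplier `|k|ⁿ`. -/
def Lamn (n : ℕ) (f : AddCircle (2 * Real.pi) → ℂ) : AddCircle (2 * Real.pi) → ℂ :=
  fun x => ∑' k : ℤ, ((|k| : ℤ) : ℂ) ^ n * fourierCoeff f k * fourier k x

/-- `∂₁ⁿ`: Fourier multiplier `(ik)ⁿ` (spatial derivative of smooth periodic functions). -/
def Dn (n : ℕ) (f : AddCircle (2 * Real.pi) → ℂ) : AddCircle (2 * Real.pi) → ℂ :=
  fun x => ∑' k : ℤ, (Complex.I * (k : ℂ)) ^ n * fourierCoeff f k * fourier k x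

/-- A smooth (rapidly decaying Fourier coefficients) real-valued zero-mean function on `S¹`,
given by the sum of its Fourier series. -/
def IsNice (f : AddCircle (2 * Real.pi) → ℂ) : Prop :=
  (∀ n : ℕ, Summable fun k : ℤ => ((|k| : ℤ) : ℝ) ^ n * ‖fourierCoeff f k‖) ∧
  (∀ x, (f x).im = 0) ∧ fourierCoeff f 0 = 0 ∧
  (∀ x, f x = ∑' k : ℤ, fourierCoeff f k * fourier k x)

/-!
Each of the three terms is a bilinear Fourier multiplier `∑ σ(m, n) f̂(m) ĝ(n) e^{i(m+n)x}`, with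
symbol `|m + n|` for `Λ(fg)`, `-|m + n| sgn m sgn n` for `Λ(Hf Hg)` and `(m + n)(sgn m + sgn n)`
for `∂₁(f Hg + g Hf)`. The identity is therefore the equality
`|m + n| (1 + sgn m sgn n) = (m + n)(sgn m + sgn n)` of symbols: for opposite signs both sides
vanish, for equal signs `|m + n| = (m + n) sgn m`, and for `m = 0` it reads `|n| = n sgn n`.
-/

section Multipliers

variable {T : ℝ}

lemma norm_fourier_apply (k : ℤ) (x : AddCircle T) : ‖fourier k x‖ = 1 := by
  rw [fourier_apply, Circle.norm_coe]

lemma summable_norm_mul_fourier {ι : Type*} {u : ι → ℂ} (hu : Summable fun i => ‖u i‖)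
    (φ : ι → ℤ) (x : AddCircle T) : Summable fun i => ‖u i * fourier (φ i) x‖ := by
  simpa only [norm_mul, norm_fourier_apply, mul_one] using hu

variable [Fact (0 < T)]

lemma fourierCoeff_const_mul_fourier (c : ℂ) (j k : ℤ) :
    fourierCoeff (fun x : AddCircle T => c * fourier j x) k = if j = k then c else 0 := by
  rw [fourierCoeff.const_mul, fourierCoeff_fourier, Pi.single_apply, mul_ite, mul_one, mul_zero]
  simp only [eq_comm]

lemma hasSum_fourierCoeff_of_hasSum {ι : Type*} [Countable ι] {u : ι → ℂ} {φ : ι → ℤ}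
    {F : AddCircle T → ℂ} (hu : Summable fun i => ‖u i‖)
    (hF : ∀ x, HasSum (fun i => u i * fourier (φ i) x) (F x)) (k : ℤ) :
    HasSum (fun i => if φ i = k then u i else 0) (fourierCoeff F k) := by
  have integrable_term (i : ι) :
      Integrable (fun x : AddCircle T => fourier (-k) x • (u i * fourier (φ i) x))
        AddCircle.haarAddCircle :=
    Continuous.integrable_of_hasCompactSupport (by fun_prop) (.of_compactSpace _)
  have integral_norm_term (i : ι) :
      ∫ x : AddCircle T, ‖fourier (-k) x • (u i * fourier (φ i) x)‖ ∂AddCircle.haarAddCircle =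
        ‖u i‖ := by
    simp only [norm_smul, norm_mul, norm_fourier_apply, one_mul, mul_one, integral_const,
      probReal_univ, one_smul]
  have tsum_term (x : AddCircle T) :
      ∑' i, fourier (-k) x • (u i * fourier (φ i) x) = fourier (-k) x • F x :=
    ((hF x).const_smul _).tsum_eq
  have hsum := hasSum_integral_of_summable_integral_norm integrable_term
    (by simpa only [integral_norm_term] using hu)
  simp only [tsum_term] at hsum
  exact hsum.congr_fun fun i => (fourierCoeff_const_mul_fourier (u i) (φ i) k).symm

/-- The linear Fourier multiplier `w(D) f` with symbol `w`. It is defined pointwise by its Fourier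
series, so it takes the junk value `0` wherever that series does not converge. -/
def fourierMultiplier (w : ℤ → ℂ) (f : AddCircle T → ℂ) : AddCircle T → ℂ :=
  fun x => ∑' k : ℤ, w k * fourierCoeff f k * fourier k x

lemma hasSum_fourierMultiplier {w : ℤ → ℂ} {f : AddCircle T → ℂ}
    (h : Summable fun k => ‖w k * fourierCoeff f k‖) (x : AddCircle T) :
    HasSum (fun k => w k * fourierCoeff f k * fourier k x) (fourierMultiplier w f x) :=
  (summable_norm_mul_fourier h id x).of_norm.hasSum

lemma fourierMultiplier_one {f : AddCircle T → ℂ} (hf : Continuous f)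
    (h : Summable fun k => ‖fourierCoeff f k‖) : fourierMultiplier (fun _ => 1) f = f := by
  funext x
  simp only [fourierMultiplier, one_mul]
  exact (has_pointwise_sum_fourier_series_of_summable (f := ⟨f, hf⟩) h.of_norm x).tsum_eq

lemma hasSum_fourierMultiplier_of_hasSum {ι : Type*} [Countable ι] {u : ι → ℂ} {φ : ι → ℤ}
    {F : AddCircle T → ℂ} {w : ℤ → ℂ} (hu : Summable fun i => ‖u i‖)
    (hF : ∀ x, HasSum (fun i => u i * fourier (φ i) x) (F x))
    (hw : Summable fun i => ‖w (φ i) * u i‖) (x : AddCircle T) :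
    HasSum (fun i => w (φ i) * u i * fourier (φ i) x) (fourierMultiplier w F x) := by
  have hs := (summable_norm_mul_fourier hw φ x).of_norm
  have fiber (k : ℤ) : ∑' i : φ ⁻¹' {k}, w (φ i) * u i * fourier (φ i) x =
      w k * fourierCoeff F k * fourier k x := by
    rw [← (hasSum_fourierCoeff_of_hasSum hu hF k).tsum_eq, ← tsum_mul_left, ← tsum_mul_right,
      tsum_subtype (φ ⁻¹' {k}) fun i => w (φ i) * u i * fourier (φ i) x]
    refine tsum_congr fun i => ?_
    by_cases h : φ i = k <;> simp [h]
  rw [fourierMultiplier, ← tsum_congr fiber, (hs.hasSum.tsum_fiberwise φ).tsum_eq]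
  exact hs.hasSum

/-- `F` is the bilinear Fourier multiplier with symbol `σ` applied to `(f, g)`, that is
`F(x) = ∑ σ(m, n) f̂(m) ĝ(n) e_{m+n}(x)` with an absolutely convergent double series. A relation
between functions, rather than an operator, so that equality of `F` and `G` follows from equality
of their symbols. -/
structure HasBilinearSymbol (f g : AddCircle T → ℂ) (σ : ℤ → ℤ → ℂ) (F : AddCircle T → ℂ) :
    Prop where
  summable : Summable fun p : ℤ × ℤ => ‖σ p.1 p.2 * (fourierCoeff f p.1 * fourierCoeff g p.2)‖
  hasSum : ∀ x, HasSum (fun p : ℤ × ℤ =>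
    σ p.1 p.2 * (fourierCoeff f p.1 * fourierCoeff g p.2) * fourier (p.1 + p.2) x) (F x)

namespace HasBilinearSymbol

variable {f g F G : AddCircle T → ℂ} {σ τ : ℤ → ℤ → ℂ}

lemma unique (hF : HasBilinearSymbol f g σ F) (hG : HasBilinearSymbol f g σ G) : F = G :=
  funext fun x => (hF.hasSum x).unique (hG.hasSum x)

lemma add (hF : HasBilinearSymbol f g σ F) (hG : HasBilinearSymbol f g τ G) :
    HasBilinearSymbol f g (fun m n => σ m n + τ m n) (fun x => F x + G x) where
  summable := by
    refine (hF.summable.add hG.summable).of_nonneg_of_le (fun _ => norm_nonneg _) fun p => ?_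
    rw [add_mul]
    exact norm_add_le _ _
  hasSum x := by simpa only [add_mul] using (hF.hasSum x).add (hG.hasSum x)

lemma mul_fourierMultiplier {μ ν : ℤ → ℂ} (hμ : Summable fun k => ‖μ k * fourierCoeff f k‖)
    (hν : Summable fun k => ‖ν k * fourierCoeff g k‖) :
    HasBilinearSymbol f g (fun m n => μ m * ν n)
      (fun x => fourierMultiplier μ f x * fourierMultiplier ν g x) where
  summable := by simpa only [mul_mul_mul_comm] using hμ.mul_norm hν
  hasSum x := by
    have hs := summable_mul_of_summable_norm (summable_norm_mul_fourier hμ id x)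
      (summable_norm_mul_fourier hν id x)
    refine ((hasSum_fourierMultiplier hμ x).mul (hasSum_fourierMultiplier hν x) hs).congr_fun
      fun p => ?_
    rw [fourier_add]
    ring

lemma mul (hf : Continuous f) (hg : Continuous g)
    (hf' : Summable fun k => ‖fourierCoeff f k‖) (hg' : Summable fun k => ‖fourierCoeff g k‖) :
    HasBilinearSymbol f g (fun _ _ => 1) (fun x => f x * g x) := by
  have h := mul_fourierMultiplier (f := f) (g := g) (μ := fun _ => 1)
    (ν := fun _ => 1) (by simpa using hf') (by simpa using hg')
  simpa only [fourierMultiplier_one hf hf', fourierMultiplier_one hg hg', one_mul] using h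

lemma apply_fourierMultiplier {w : ℤ → ℂ} (hF : HasBilinearSymbol f g σ F)
    (hw : Summable fun p : ℤ × ℤ =>
      ‖w (p.1 + p.2) * σ p.1 p.2 * (fourierCoeff f p.1 * fourierCoeff g p.2)‖) :
    HasBilinearSymbol f g (fun m n => w (m + n) * σ m n) (fourierMultiplier w F) where
  summable := hw
  hasSum x := by
    simp only [mul_assoc (w _) (σ _ _)] at hw ⊢
    exact hasSum_fourierMultiplier_of_hasSum hF.summable hF.hasSum hw x

end HasBilinearSymbol

lemma summable_of_summable_abs_mul {c : ℤ → ℝ} (h : Summable fun k : ℤ => |(k : ℝ)| * c k) :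
    Summable c := by
  refine h.norm.of_norm_bounded_eventually ?_
  filter_upwards [(Set.finite_singleton (0 : ℤ)).compl_mem_cofinite] with k hk
  have one_le_abs : 1 ≤ |(k : ℝ)| := mod_cast Int.one_le_abs hk
  rw [norm_mul, Real.norm_of_nonneg (abs_nonneg (k : ℝ))]
  exact le_mul_of_one_le_left (norm_nonneg _) one_le_abs

lemma HasBilinearSymbol.apply_fourierMultiplier_of_norm_le {f g F : AddCircle T → ℂ} {σ : ℤ → ℤ → ℂ}
    {w : ℤ → ℂ} {C : ℝ} (hF : HasBilinearSymbol f g σ F)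
    (hf : Summable fun k : ℤ => |(k : ℝ)| * ‖fourierCoeff f k‖)
    (hg : Summable fun k : ℤ => |(k : ℝ)| * ‖fourierCoeff g k‖)
    (hw : ∀ k, ‖w k‖ ≤ |(k : ℝ)|) (hσ : ∀ m n, ‖σ m n‖ ≤ C) :
    HasBilinearSymbol f g (fun m n => w (m + n) * σ m n) (fourierMultiplier w F) := by
  have weighted {c : ℤ → ℝ} (hc : Summable fun k : ℤ => |(k : ℝ)| * c k) :
      Summable fun k : ℤ => (1 + |(k : ℝ)|) * c k := by
    simpa only [add_mul, one_mul] using (summable_of_summable_abs_mul hc).add hc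
  -- The product weight `(1 + |m|)(1 + |n|)` dominates `|m + n|` and
  -- makes the double series factor.
  have majorant := ((weighted hf).mul_of_nonneg (weighted hg) (fun _ => by positivity)
    fun _ => by positivity).mul_left C
  refine hF.apply_fourierMultiplier (majorant.of_nonneg_of_le (fun _ => norm_nonneg _) ?_)
  rintro ⟨m, n⟩
  have w_le : ‖w (m + n)‖ ≤ (1 + |(m : ℝ)|) * (1 + |(n : ℝ)|) := by
    have w_le_add : ‖w (m + n)‖ ≤ |(m : ℝ)| + |(n : ℝ)| :=
      (hw (m + n)).trans (by simpa using abs_add_le (m : ℝ) n)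
    nlinarith [mul_nonneg (abs_nonneg (m : ℝ)) (abs_nonneg (n : ℝ))]
  calc ‖w (m + n) * σ m n * (fourierCoeff f m * fourierCoeff g n)‖
      = ‖w (m + n)‖ * ‖σ m n‖ * (‖fourierCoeff f m‖ * ‖fourierCoeff g n‖) := by
        simp only [norm_mul]
    _ ≤ (1 + |(m : ℝ)|) * (1 + |(n : ℝ)|) * C * (‖fourierCoeff f m‖ * ‖fourierCoeff g n‖) := by
        gcongr
        exact hσ m n
    _ = C * ((1 + |(m : ℝ)|) * ‖fourierCoeff f m‖ * ((1 + |(n : ℝ)|) * ‖fourierCoeff g n‖)) := by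
        ring

end Multipliers

lemma norm_intCast_sign_le_one (k : ℤ) : ‖(k.sign : ℂ)‖ ≤ 1 := by
  rcases lt_trichotomy k 0 with h | rfl | h
  · simp [Int.sign_eq_neg_one_of_neg h]
  · simp
  · simp [Int.sign_eq_one_of_pos h]

lemma summable_norm_neg_I_mul_sign_mul {c : ℤ → ℂ} (h : Summable fun k => ‖c k‖) :
    Summable fun k : ℤ => ‖-Complex.I * (k.sign : ℂ) * c k‖ := by
  refine h.of_nonneg_of_le (fun _ => norm_nonneg _) fun k => ?_
  rw [norm_mul, norm_mul, norm_neg, Complex.norm_I, one_mul]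
  exact mul_le_of_le_one_left (norm_nonneg _) (norm_intCast_sign_le_one k)

lemma abs_add_mul_one_add_sign_mul_sign (m n : ℤ) :
    |m + n| * (1 + m.sign * n.sign) = (m + n) * (m.sign + n.sign) := by
  rcases lt_trichotomy m 0 with hm | rfl | hm <;> rcases lt_trichotomy n 0 with hn | rfl | hn <;>
    grind [Int.sign_eq_neg_one_of_neg, Int.sign_eq_one_of_pos, Int.sign_zero]

section Hilbert

variable {f g : AddCircle (2 * Real.pi) → ℂ}

lemma Hop_eq_fourierMultiplier : Hop f = fourierMultiplier (fun k => -Complex.I * k.sign) f :=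
  rfl

lemma Lamn_one_eq_fourierMultiplier : Lamn 1 f = fourierMultiplier (fun k => (|k| : ℤ)) f := by
  funext x
  simp only [Lamn, pow_one, fourierMultiplier]

lemma Dn_one_eq_fourierMultiplier : Dn 1 f = fourierMultiplier (fun k => Complex.I * k) f := by
  funext x
  simp only [Dn, pow_one, fourierMultiplier]

lemma hasBilinearSymbol_Hop_mul_Hop (hf : Summable fun k => ‖fourierCoeff f k‖)
    (hg : Summable fun k => ‖fourierCoeff g k‖) :
    HasBilinearSymbol f g (fun m n => -(m.sign * n.sign : ℂ)) (fun x => Hop f x * Hop g x) := by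
  rw [Hop_eq_fourierMultiplier, Hop_eq_fourierMultiplier]
  convert HasBilinearSymbol.mul_fourierMultiplier (summable_norm_neg_I_mul_sign_mul hf)
    (summable_norm_neg_I_mul_sign_mul hg) using 3 with m n
  linear_combination -(m.sign * n.sign : ℂ) * Complex.I_sq

lemma hasBilinearSymbol_mul_Hop_add_mul_Hop (hf : Continuous f) (hg : Continuous g)
    (hf' : Summable fun k => ‖fourierCoeff f k‖) (hg' : Summable fun k => ‖fourierCoeff g k‖) :
    HasBilinearSymbol f g (fun m n => -Complex.I * (m.sign + n.sign))
      (fun x => f x * Hop g x + g x * Hop f x) := by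
  have f_mul_Hg := HasBilinearSymbol.mul_fourierMultiplier (f := f) (μ := fun _ => 1)
    (by simpa using hf') (summable_norm_neg_I_mul_sign_mul hg')
  have Hf_mul_g := HasBilinearSymbol.mul_fourierMultiplier (g := g) (ν := fun _ => 1)
    (summable_norm_neg_I_mul_sign_mul hf') (by simpa using hg')
  rw [fourierMultiplier_one hf hf', ← Hop_eq_fourierMultiplier] at f_mul_Hg
  rw [fourierMultiplier_one hg hg', ← Hop_eq_fourierMultiplier] at Hf_mul_g
  convert f_mul_Hg.add Hf_mul_g using 3 with m n x
  · ring
  · exact mul_comm _ _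

section FirstOrder

variable {F : AddCircle (2 * Real.pi) → ℂ} {σ : ℤ → ℤ → ℂ} {C : ℝ}

lemma HasBilinearSymbol.Lamn_one (hF : HasBilinearSymbol f g σ F)
    (hf : Summable fun k : ℤ => |(k : ℝ)| * ‖fourierCoeff f k‖)
    (hg : Summable fun k : ℤ => |(k : ℝ)| * ‖fourierCoeff g k‖) (hσ : ∀ m n, ‖σ m n‖ ≤ C) :
    HasBilinearSymbol f g (fun m n => ((|m + n| : ℤ) : ℂ) * σ m n) (Lamn 1 F) := by
  rw [Lamn_one_eq_fourierMultiplier]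
  exact hF.apply_fourierMultiplier_of_norm_le (w := fun k => (|k| : ℤ)) hf hg (by simp) hσ

lemma HasBilinearSymbol.Dn_one (hF : HasBilinearSymbol f g σ F)
    (hf : Summable fun k : ℤ => |(k : ℝ)| * ‖fourierCoeff f k‖)
    (hg : Summable fun k : ℤ => |(k : ℝ)| * ‖fourierCoeff g k‖) (hσ : ∀ m n, ‖σ m n‖ ≤ C) :
    HasBilinearSymbol f g (fun m n => Complex.I * (m + n : ℤ) * σ m n) (Dn 1 F) := by
  rw [Dn_one_eq_fourierMultiplier]
  exact hF.apply_fourierMultiplier_of_norm_le (w := fun k => Complex.I * k) hf hg (by simp) hσ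

end FirstOrder

theorem lambda_product_identity_general (hf : Continuous f) (hg : Continuous g)
    (hf' : Summable fun k : ℤ => |(k : ℝ)| * ‖fourierCoeff f k‖)
    (hg' : Summable fun k : ℤ => |(k : ℝ)| * ‖fourierCoeff g k‖) (x : AddCircle (2 * Real.pi)) :
    Lamn 1 (fun y => f y * g y) x =
      Lamn 1 (fun y => Hop f y * Hop g y) x +
        Dn 1 (fun y => f y * Hop g y + g y * Hop f y) x := by
  have hf₀ := summable_of_summable_abs_mul hf'
  have hg₀ := summable_of_summable_abs_mul hg'
  have hΛfg := (HasBilinearSymbol.mul hf hg hf₀ hg₀).Lamn_one (C := 1) hf' hg' (by simp)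
  have hΛHfHg := (hasBilinearSymbol_Hop_mul_Hop hf₀ hg₀).Lamn_one (C := 1) hf' hg' fun m n => by
    rw [norm_neg, norm_mul]
    exact mul_le_one₀ (norm_intCast_sign_le_one m) (norm_nonneg _) (norm_intCast_sign_le_one n)
  have hD := (hasBilinearSymbol_mul_Hop_add_mul_Hop hf hg hf₀ hg₀).Dn_one (C := 1 + 1) hf' hg'
    fun m n => by
      rw [norm_mul, norm_neg, Complex.norm_I, one_mul]
      exact norm_add_le_of_le (norm_intCast_sign_le_one m) (norm_intCast_sign_le_one n)
  have hsum := hΛHfHg.add hD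
  have symbol_eq (m n : ℤ) : ((|m + n| : ℤ) : ℂ) * -(m.sign * n.sign) +
      Complex.I * (m + n : ℤ) * (-Complex.I * (m.sign + n.sign)) = ((|m + n| : ℤ) : ℂ) * 1 := by
    have h : ((|m + n| : ℤ) : ℂ) * (1 + m.sign * n.sign) = (m + n : ℤ) * (m.sign + n.sign) :=
      mod_cast abs_add_mul_one_add_sign_mul_sign m n
    linear_combination -h - ((m + n : ℤ) : ℂ) * (m.sign + n.sign) * Complex.I_sq
  simp only [symbol_eq] at hsum
  exact congrFun (hΛfg.unique hsum) x

end Hilbert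

lemma IsNice.summable_abs_mul {f : AddCircle (2 * Real.pi) → ℂ} (hf : IsNice f) :
    Summable fun k : ℤ => |(k : ℝ)| * ‖fourierCoeff f k‖ := by
  simpa only [Int.cast_abs, pow_one] using hf.1 1

lemma IsNice.continuous {f : AddCircle (2 * Real.pi) → ℂ} (hf : IsNice f) : Continuous f := by
  rw [funext hf.2.2.2]
  refine continuous_tsum (fun k => by fun_prop) (summable_of_summable_abs_mul hf.summable_abs_mul)
    fun k x => ?_
  rw [norm_mul, norm_fourier_apply, mul_one]

/-- For smooth real-valued zero-mean `f, g` on `S¹`,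
`Λ(f·g) = Λ(Hf·Hg) + ∂₁(f·Hg + g·Hf)` pointwise. -/
theorem lambda_product_identity (f g : AddCircle (2 * Real.pi) → ℂ)
    (hf : IsNice f) (hg : IsNice g) :
    ∀ x, Lamn 1 (fun y => f y * g y) x =
      Lamn 1 (fun y => Hop f y * Hop g y) x +
        Dn 1 (fun y => f y * Hop g y + g y * Hop f y) x :=
  lambda_product_identity_general hf.continuous hg.continuous hf.summable_abs_mul
    hg.summable_abs_mul
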